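/- Let n be an odd positive integer and 1/2 ≤ p ≤ 1. Then the majority-cheating probability grows with the number of workers: P_C(n+2,p) ≥ P_C(n,p). -/

import Mathlib

/-- The probability that a strict majority of `n` independent workers cheat,
when each cheats independently with probability `p`. -/
noncomputable def majProb (n : ℕ) (p : ℝ) : ℝ :=
  ∑ k ∈ Finset.Icc ((n + 1) / 2) n, (n.choose k : ℝ) * p ^ k * (1 - p) ^ (n - k)

/-- binomial weight -/
noncomputable def bw (p : ℝ) (n k : ℕ) : ℝ := (n.choose k : ℝ) * p ^ k * (1 - p) ^ (n - k)

lemma bw_zero (p : ℝ) (n k : ℕ) (h : n < k) : bw p n k = 0 := by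
  simp [bw, Nat.choose_eq_zero_of_lt h]

lemma bw_succ (p : ℝ) (n k : ℕ) : bw p (n+1) (k+1) = p * bw p n k + (1-p) * bw p n (k+1) := by
  rcases lt_or_ge k n with h | h
  · obtain ⟨d, rfl⟩ := Nat.exists_eq_add_of_lt h
    have e1 : k + d + 1 + 1 - (k + 1) = d + 1 := by omega
    have e2 : k + d + 1 - k = d + 1 := by omega
    have e3 : k + d + 1 - (k + 1) = d := by omega
    simp only [bw, e1, e2, e3, Nat.choose_succ_succ' (k+d+1) k]
    push_cast
    ring
  · rw [bw_zero p n (k+1) (by omega)]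
    rcases h.eq_or_lt with h | h
    · subst h
      simp [bw]
      ring
    · rw [bw_zero p n k h, bw_zero p (n+1) (k+1) (by omega)]
      ring

/-- tail sum -/
noncomputable def tl (p : ℝ) (N n j : ℕ) : ℝ := ∑ i ∈ Finset.range N, bw p n (j + i)

lemma tl_succ (p : ℝ) (N n j : ℕ) :
    tl p N (n+1) (j+1) = p * tl p N n j + (1-p) * tl p N n (j+1) := by
  simp only [tl, Finset.mul_sum, ← Finset.sum_add_distrib]
  refine Finset.sum_congr rfl fun i _ => ?_
  rw [show j + 1 + i = (j + i) + 1 by ring, bw_succ]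

lemma tl_shift (p : ℝ) (N n j : ℕ) (h : n < j + N) :
    tl p N n j = bw p n j + tl p N n (j+1) := by
  have h1 := Finset.sum_range_succ (fun i => bw p n (j + i)) N
  rw [Finset.sum_range_succ'] at h1
  simp only [bw_zero p n (j+N) h] at h1
  simp only [tl, show ∀ i, j + 1 + i = j + (i + 1) from fun i => by ring]
  simp at h1
  linarith

lemma majProb_eq (p : ℝ) (m N : ℕ) (h : m + 1 ≤ N) :
    majProb (2*m+1) p = tl p N (2*m+1) (m+1) := by
  have e : (2 * m + 1 + 1) / 2 = m + 1 := by omega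
  have e2 : 2 * m + 1 + 1 - (m + 1) = m + 1 := by omega
  unfold majProb tl
  rw [e, ← Finset.Ico_add_one_right_eq_Icc, Finset.sum_Ico_eq_sum_range, e2]
  refine Finset.sum_subset (Finset.range_mono h) fun i _ hi => ?_
  simp only [Finset.mem_range, not_lt] at hi
  exact bw_zero p _ _ (by omega)

theorem majProb_add_two_ge (n : ℕ) (hn : Odd n) (hpos : 0 < n)
    (p : ℝ) (hp : 1 / 2 ≤ p) (hp1 : p ≤ 1) :
    majProb n p ≤ majProb (n + 2) p := by
  obtain ⟨m, rfl⟩ := hn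
  rw [majProb_eq p m (m+2) (by omega), show 2*m+1+2 = 2*(m+1)+1 by ring,
    majProb_eq p (m+1) (m+2) (by omega), show 2*(m+1)+1 = 2*m+1+1+1 by ring,
    tl_succ p (m+2) (2*m+1+1) (m+1), tl_succ p (m+2) (2*m+1) m,
    tl_succ p (m+2) (2*m+1) (m+1), tl_shift p (m+2) (2*m+1) m (by omega),
    tl_shift p (m+2) (2*m+1) (m+1) (by omega)]
  have hc : (2*m+1).choose (m+1) = (2*m+1).choose m := by
    apply Nat.choose_symm_of_eq_add
    omega
  have e1 : bw p (2*m+1) m = ((2*m+1).choose m : ℝ) * p^m * (1-p)^m * (1-p) := by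
    rw [bw, show 2*m+1-m = m+1 by omega]
    ring
  have e2 : bw p (2*m+1) (m+1) = ((2*m+1).choose m : ℝ) * p^m * (1-p)^m * p := by
    rw [bw, hc, show 2*m+1-(m+1) = m by omega]
    ring
  have hq : 0 ≤ 1 - p := by linarith
  have hp0 : 0 ≤ p := by linarith
  have h2 : 0 ≤ 2 * p - 1 := by linarith
  have key : 0 ≤ ((2*m+1).choose m : ℝ) * p^m * (1-p)^m * (p * (1-p) * (2*p-1)) := by positivity
  rw [e1, e2]
  linear_combination key
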